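/- Let V = W_{χ(m₁)}(m₁) ⊕ … ⊕ W_{χ(m_s)}(m_s) (m₁ ≥ … ≥ m_s) be a form module over an algebraically closed field of characteristic 2 corresponding to a nilpotent ξ ∈ sp(2n)*, and Z(V) = {g ∈ GL(V) : β(gv,gw) = β(v,w), α_ξ(gv) = α_ξ(v) ∀v,w} the centralizer of ξ in Sp(2n). Then dim Z(V) = Σ_{i=1}^{s} ((4i−1)m_i − 2χ(m_i)). -/

import Mathlib

open Matrix

variable {k : Type} [Field k] {s : ℕ}

/-- Basis index set of `V = W_{l₁}(m₁) ⊕ ⋯ ⊕ W_{l_s}(m_s)`: the vectors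
`tᵃvᵢ` (`inl a`) and `tᵃwᵢ` (`inr a`), `a < mᵢ`. -/
def WIdx (m : Fin s → ℕ) : Type := Σ i : Fin s, (Fin (m i) ⊕ Fin (m i))

instance (m : Fin s → ℕ) : Fintype (WIdx m) := by unfold WIdx; infer_instance
instance (m : Fin s → ℕ) : DecidableEq (WIdx m) := by unfold WIdx; infer_instance

/-- The symplectic form `β` on `V`: `β(tᵃvᵢ, tᵇwᵢ) = δ_{a+b,mᵢ-1}`. -/
def symplMat (k : Type) [Field k] (m : Fin s → ℕ) : Matrix (WIdx m) (WIdx m) k :=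
  Matrix.of fun x y =>
    match x, y with
    | ⟨i, Sum.inl a⟩, ⟨j, Sum.inr b⟩ => if i = j ∧ (a : ℕ) + (b : ℕ) + 1 = m i then 1 else 0
    | ⟨i, Sum.inr a⟩, ⟨j, Sum.inl b⟩ => if i = j ∧ (a : ℕ) + (b : ℕ) + 1 = m i then 1 else 0
    | _, _ => 0

/-- A matrix `M` with `α_ξ(v) = vᵀMv`: diagonal entries `α_ξ(tᵃvᵢ) = δ_{a,lᵢ-1}`,
`α_ξ(tᵃwᵢ) = 0`, and above-diagonal entries the polarization
`β_ξ(tᵃvᵢ, tᵇwᵢ) = δ_{a+b,mᵢ-2}`. -/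
def alphaMat (k : Type) [Field k] (m l : Fin s → ℕ) : Matrix (WIdx m) (WIdx m) k :=
  Matrix.of fun x y =>
    match x, y with
    | ⟨i, Sum.inl a⟩, ⟨j, Sum.inl b⟩ =>
        if i = j ∧ (a : ℕ) = (b : ℕ) ∧ (a : ℕ) + 1 = l i then 1 else 0
    | ⟨i, Sum.inl a⟩, ⟨j, Sum.inr b⟩ => if i = j ∧ (a : ℕ) + (b : ℕ) + 2 = m i then 1 else 0
    | _, _ => 0

/-- The generic matrix, with entries the coordinate functions on the space of
`|V| × |V|` matrices. -/
noncomputable def genMat (k : Type) [Field k] (m : Fin s → ℕ) :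
    Matrix (WIdx m) (WIdx m) (MvPolynomial (WIdx m × WIdx m) k) :=
  Matrix.of fun x y => MvPolynomial.X (x, y)

/-- The ideal of equations of the centralizer
`Z(V) = {g : β(gv,gw) = β(v,w), α_ξ(gv) = α_ξ(v)}`: with `N = GᵀMG + M`, the entries of
`GᵀSG − S`, of `N − Nᵀ`, and the diagonal entries of `N` (char 2: `α_ξ ∘ G = α_ξ` iff
`N` is alternating). -/
noncomputable def betaRel (k : Type) [Field k] (m : Fin s → ℕ) :
    Matrix (WIdx m) (WIdx m) (MvPolynomial (WIdx m × WIdx m) k) :=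
  (genMat k m)ᵀ * (symplMat k m).map MvPolynomial.C * genMat k m -
    (symplMat k m).map MvPolynomial.C

/-- `N = GᵀMG + M`; in characteristic 2, `α_ξ ∘ G = α_ξ` iff `N` is alternating, i.e.
`N - Nᵀ = 0` and `diag N = 0`. -/
noncomputable def alphaRel (k : Type) [Field k] (m l : Fin s → ℕ) :
    Matrix (WIdx m) (WIdx m) (MvPolynomial (WIdx m × WIdx m) k) :=
  (genMat k m)ᵀ * (alphaMat k m l).map MvPolynomial.C * genMat k m +
    (alphaMat k m l).map MvPolynomial.C

/-- The ideal of equations of the centralizer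
`Z(V) = {g : β(gv,gw) = β(v,w), α_ξ(gv) = α_ξ(v)}` of `ξ` in `Sp(2n)`. -/
noncomputable def centralizerIdeal (k : Type) [Field k] (m l : Fin s → ℕ) :
    Ideal (MvPolynomial (WIdx m × WIdx m) k) :=
  Ideal.span
    ({p | ∃ x y : WIdx m, p = betaRel k m x y} ∪
     {p | ∃ x y : WIdx m, p = (alphaRel k m l - (alphaRel k m l)ᵀ) x y} ∪
     {p | ∃ x : WIdx m, p = alphaRel k m l x x})

section CommAlg

theorem height_of_isMaximal_mv {k σ : Type} [Field k] [IsAlgClosed k] [Finite σ]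
    (M : Ideal (MvPolynomial σ k)) [hM : M.IsMaximal] : M.height = Nat.card σ := by
  have hdim : ringKrullDim (MvPolynomial σ k) = (Nat.card σ : WithBot ℕ∞) := by
    rw [MvPolynomial.ringKrullDim_of_isNoetherianRing, ringKrullDim_eq_zero_of_field, zero_add]
  have : FiniteRingKrullDim (MvPolynomial σ k) := by
    apply finiteRingKrullDim_iff_ne_bot_and_top.mpr
    rw [hdim]
    exact ⟨by exact_mod_cast WithBot.coe_ne_bot, by
      intro h
      have : ((Nat.card σ : ℕ∞) : WithBot ℕ∞) = ((⊤ : ℕ∞) : WithBot ℕ∞) := h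
      rw [WithBot.coe_inj] at this
      exact ENat.natCast_ne_top _ this⟩
  obtain ⟨M0, hM0, h0⟩ := Ideal.exists_isMaximal_height (R := MvPolynomial σ k)
  obtain ⟨x, hx⟩ := MvPolynomial.isMaximal_iff_eq_vanishingIdeal_singleton.mp hM
  obtain ⟨y, hy⟩ := MvPolynomial.isMaximal_iff_eq_vanishingIdeal_singleton.mp hM0
  let f : (σ → k) → MvPolynomial σ k →ₐ[k] MvPolynomial σ k := fun z =>
    MvPolynomial.aeval (fun i => MvPolynomial.X i + MvPolynomial.C (z i))
  have hf : ∀ z, (f z).comp (f (-z)) = AlgHom.id k _ := by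
    intro z
    ext i
    simp [f]
  have hf' : ∀ z, (f (-z)).comp (f z) = AlgHom.id k _ := by
    intro z
    ext i
    simp [f]
  let e : MvPolynomial σ k ≃ₐ[k] MvPolynomial σ k :=
    AlgEquiv.ofAlgHom (f (y - x)) (f (-(y - x))) (hf _) (hf' _)
  have hcomap : M0.comap e.symm.toRingEquiv = M := by
    ext p
    rw [Ideal.mem_comap, hx, hy, MvPolynomial.mem_vanishingIdeal_singleton_iff,
      MvPolynomial.mem_vanishingIdeal_singleton_iff]
    have : ((MvPolynomial.aeval y).comp (f (-(y - x)))) = MvPolynomial.aeval x := by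
      ext i
      simp [f]
    rw [← this]
    rfl
  have := RingEquiv.height_comap e.symm.toRingEquiv M0
  rw [hcomap] at this
  rw [this]
  rw [hdim] at h0
  exact_mod_cast h0

theorem dim_lower {k σ E : Type} [Field k] [IsAlgClosed k] [Finite σ] [Finite E]
    (p : E → MvPolynomial σ k) (x : σ → k) (hx : ∀ e, MvPolynomial.aeval x (p e) = 0) :
    (Nat.card σ : WithBot ℕ∞) ≤
      ringKrullDim (MvPolynomial σ k ⧸ Ideal.span (Set.range p)) + (Nat.card E : WithBot ℕ∞) := by
  let M := MvPolynomial.vanishingIdeal k ({x} : Set (σ → k))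
  have hM : M.IsMaximal := MvPolynomial.isMaximal_iff_eq_vanishingIdeal_singleton.mpr ⟨x, rfl⟩
  have hs : Set.range p ⊆ (M : Set (MvPolynomial σ k)) := by
    rintro _ ⟨e, rfl⟩
    exact (MvPolynomial.mem_vanishingIdeal_singleton_iff x _).mpr (hx e)
  have h := Ideal.height_le_ringKrullDim_quotient_add_encard (p := M) _ hs
  rw [height_of_isMaximal_mv M] at h
  refine le_trans (by exact_mod_cast h) ?_
  gcongr
  have : (Set.range p).encard ≤ (Nat.card E : ℕ∞) := by
    rw [← Set.image_univ]
    refine (Set.encard_image_le _ _).trans ?_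
    rw [Set.encard_univ, ENat.card_eq_coe_natCard]
  exact_mod_cast this

theorem dim_upper {k σ : Type} [Field k] [IsAlgClosed k] [Finite σ]
    (I : Ideal (MvPolynomial σ k)) (F : Type) [Finite F]
    (H : ∀ x : σ → k, (∀ q ∈ I, MvPolynomial.aeval x q = 0) →
      ∃ p : F → MvPolynomial σ k, (∀ f, MvPolynomial.aeval x (p f) = 0) ∧
        ∀ (D : Type) [CommRing D] [IsDomain D] [Algebra k D] (y : σ → D),
          (∀ q ∈ I, MvPolynomial.aeval y q = 0) → (∀ f, MvPolynomial.aeval y (p f) = 0) →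
          ∀ c, y c ∈ Set.range (algebraMap k D)) :
    ringKrullDim (MvPolynomial σ k ⧸ I) ≤ (Nat.card F : WithBot ℕ∞) := by
  rw [ringKrullDim_le_iff_isMaximal_height_le]
  intro M hM
  have hM' : (M.comap (Ideal.Quotient.mk I)).IsMaximal :=
    Ideal.comap_isMaximal_of_surjective _ Ideal.Quotient.mk_surjective
  obtain ⟨x, hx⟩ := MvPolynomial.isMaximal_iff_eq_vanishingIdeal_singleton.mp hM'
  have hxI : ∀ q ∈ I, MvPolynomial.aeval x q = 0 := by
    intro q hq
    rw [← MvPolynomial.mem_vanishingIdeal_singleton_iff (k := k), ← hx, Ideal.mem_comap,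
      Ideal.Quotient.eq_zero_iff_mem.mpr hq]
    exact M.zero_mem
  obtain ⟨p, hp, hp'⟩ := H x hxI
  let S : Set (MvPolynomial σ k ⧸ I) := Set.range fun f => Ideal.Quotient.mk I (p f)
  have hSM : Ideal.span S ≤ M := by
    rw [Ideal.span_le]
    rintro _ ⟨f, rfl⟩
    have : p f ∈ M.comap (Ideal.Quotient.mk I) := by
      rw [hx]; exact (MvPolynomial.mem_vanishingIdeal_singleton_iff x _).mpr (hp f)
    exact this
  have hmin : M ∈ (Ideal.span S).minimalPrimes := by
    refine ⟨⟨hM.isPrime, hSM⟩, ?_⟩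
    rintro q ⟨hq, hSq⟩ hqM
    have hsurj : Function.Surjective
        (algebraMap k ((MvPolynomial σ k ⧸ I) ⧸ q)) := by
      let φ : MvPolynomial σ k →ₐ[k] ((MvPolynomial σ k ⧸ I) ⧸ q) :=
        (Ideal.Quotient.mkₐ k q).comp (Ideal.Quotient.mkₐ k I)
      have hφ : MvPolynomial.aeval (fun c => φ (MvPolynomial.X c)) = φ := by
        ext i; simp
      have key := hp' ((MvPolynomial σ k ⧸ I) ⧸ q) (fun c => φ (MvPolynomial.X c)) (by
        intro r hr
        rw [hφ]
        have : Ideal.Quotient.mk I r = 0 := Ideal.Quotient.eq_zero_iff_mem.mpr hr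
        simp [φ, this]) (by
        intro f
        rw [hφ]
        have : Ideal.Quotient.mk I (p f) ∈ q := hSq (Ideal.subset_span ⟨f, rfl⟩)
        have := Ideal.Quotient.eq_zero_iff_mem.mpr this
        simpa [φ] using this)
      intro z
      obtain ⟨z, rfl⟩ := Ideal.Quotient.mk_surjective z
      obtain ⟨z, rfl⟩ := Ideal.Quotient.mk_surjective z
      choose g hg using key
      refine ⟨MvPolynomial.aeval g z, ?_⟩
      have h2 : ((Algebra.ofId k _).comp (MvPolynomial.aeval g)) = φ := by
        ext c
        simpa [Algebra.ofId_apply] using hg c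
      exact DFunLike.congr_fun h2 z
    have hqmax : q.IsMaximal := by
      have hb : Function.Bijective (algebraMap k ((MvPolynomial σ k ⧸ I) ⧸ q)) :=
        ⟨(algebraMap k _).injective, hsurj⟩
      have hf : IsField ((MvPolynomial σ k ⧸ I) ⧸ q) :=
        (RingEquiv.ofBijective _ hb).symm.toMulEquiv.isField (Field.toIsField k)
      exact Ideal.Quotient.maximal_of_isField q hf
    exact (hqmax.eq_of_le hM.ne_top hqM).ge
  have h := Ideal.height_le_card_of_mem_minimalPrimes_span (Set.finite_range _) hmin
  have h2 : S.ncard ≤ Nat.card F := by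
    rw [← Nat.card_coe_set_eq]
    exact Finite.card_range_le _
  have h3 : M.height ≤ (Nat.card F : ℕ∞) := h.trans (by exact_mod_cast h2)
  exact_mod_cast h3

end CommAlg

namespace CentAux

section Idx

variable {m : Fin s → ℕ}

/-- Block of a basis index. -/
def bl (x : WIdx m) : Fin s := Sigma.fst x

/-- Side of a basis index: `false` for `v`, `true` for `w`. -/
def sd : WIdx m → Bool
  | ⟨_, Sum.inl _⟩ => false
  | ⟨_, Sum.inr _⟩ => true

/-- Exponent of `t` of a basis index. -/
def ps : WIdx m → ℕ
  | ⟨_, Sum.inl a⟩ => a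
  | ⟨_, Sum.inr a⟩ => a

/-- Constructor for basis indices. -/
def mkW (i : Fin s) (σ : Bool) (a : ℕ) (h : a < m i) : WIdx m :=
  match σ with
  | false => ⟨i, Sum.inl ⟨a, h⟩⟩
  | true => ⟨i, Sum.inr ⟨a, h⟩⟩

@[simp] theorem bl_mk (i : Fin s) (σ : Bool) (a : ℕ) (h : a < m i) : bl (mkW i σ a h) = i := by
  cases σ <;> rfl
@[simp] theorem sd_mk (i : Fin s) (σ : Bool) (a : ℕ) (h : a < m i) : sd (mkW i σ a h) = σ := by
  cases σ <;> rfl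
@[simp] theorem ps_mk (i : Fin s) (σ : Bool) (a : ℕ) (h : a < m i) : ps (mkW i σ a h) = a := by
  cases σ <;> rfl

theorem exists_mk (x : WIdx m) : ∃ i σ a, ∃ h : a < m i, x = mkW i σ a h := by
  rcases x with ⟨i, a | a⟩
  · exact ⟨i, false, a, a.2, rfl⟩
  · exact ⟨i, true, a, a.2, rfl⟩

theorem ps_lt (x : WIdx m) : ps x < m (bl x) := by
  obtain ⟨i, σ, a, h, rfl⟩ := exists_mk x
  simpa using h

theorem mk_inj {i j : Fin s} {σ τ : Bool} {a b : ℕ} {h : a < m i} {h' : b < m j} :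
    mkW i σ a h = mkW j τ b h' ↔ i = j ∧ σ = τ ∧ a = b := by
  constructor
  · intro e
    refine ⟨?_, ?_, ?_⟩
    · simpa using congrArg bl e
    · simpa using congrArg sd e
    · simpa using congrArg ps e
  · rintro ⟨rfl, rfl, rfl⟩; rfl

theorem widx_ext {x y : WIdx m} (h1 : bl x = bl y) (h2 : sd x = sd y) (h3 : ps x = ps y) :
    x = y := by
  obtain ⟨i, σ, a, h, rfl⟩ := exists_mk x
  obtain ⟨j, τ, b, h', rfl⟩ := exists_mk y
  rw [mk_inj]
  simp only [bl_mk, sd_mk, ps_mk] at h1 h2 h3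
  exact ⟨h1, h2, h3⟩

/-- The dual basis index. -/
def opp (x : WIdx m) : WIdx m :=
  mkW (bl x) (!sd x) (m (bl x) - 1 - ps x) (by have := ps_lt x; omega)

@[simp] theorem bl_opp (x : WIdx m) : bl (opp x) = bl x := by simp [opp]
@[simp] theorem sd_opp (x : WIdx m) : sd (opp x) = !sd x := by simp [opp]
theorem ps_opp (x : WIdx m) : ps (opp x) = m (bl x) - 1 - ps x := by simp [opp]

@[simp] theorem opp_opp (x : WIdx m) : opp (opp x) = x := by
  apply widx_ext
  · simp
  · simp
  · rw [ps_opp, ps_opp, bl_opp]; have := ps_lt x; omega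

end Idx

section Mats

variable (D : Type) [CommRing D] (m l : Fin s → ℕ)

/-- The symplectic form over `D`. -/
def SD : Matrix (WIdx m) (WIdx m) D := Matrix.of fun x y => if y = opp x then 1 else 0

/-- The `v,w` half of the symplectic form. -/
def UD : Matrix (WIdx m) (WIdx m) D :=
  Matrix.of fun x y => if sd x = false ∧ y = opp x then 1 else 0

/-- The shift matrix. -/
def TD : Matrix (WIdx m) (WIdx m) D :=
  Matrix.of fun x y => if bl x = bl y ∧ sd x = sd y ∧ ps x = ps y + 1 then 1 else 0

/-- The diagonal part of the quadratic form. -/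
def DD : Matrix (WIdx m) (WIdx m) D :=
  Matrix.of fun x y => if x = y ∧ sd x = false ∧ ps x + 1 = l (bl x) then 1 else 0

/-- The quadratic form. -/
def MD : Matrix (WIdx m) (WIdx m) D := DD D m l + UD D m * TD D m

variable {D m l}

theorem SD_mul (G : Matrix (WIdx m) (WIdx m) D) (x y : WIdx m) :
    (SD D m * G) x y = G (opp x) y := by
  simp [Matrix.mul_apply, SD]

theorem mul_SD (G : Matrix (WIdx m) (WIdx m) D) (x y : WIdx m) :
    (G * SD D m) x y = G x (opp y) := by
  rw [Matrix.mul_apply, Finset.sum_eq_single (opp y)]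
  · simp [SD]
  · intro z _ hz
    have : y ≠ opp z := by rintro rfl; simp at hz
    simp [SD, this]
  · simp

theorem SD_sq : SD D m * SD D m = 1 := by
  ext x y
  rw [SD_mul]
  simp [SD, Matrix.one_apply, eq_comm]

theorem SD_transpose : (SD D m)ᵀ = SD D m := by
  ext x y
  have : x = opp y ↔ y = opp x := by
    constructor <;> (rintro rfl; simp)
  simp [SD, this]

theorem SD_eq : SD D m = UD D m + (UD D m)ᵀ := by
  ext x y
  have : x = opp y ↔ y = opp x := by
    constructor <;> (rintro rfl; simp)
  simp only [SD, UD, Matrix.add_apply, Matrix.transpose_apply, Matrix.of_apply, this]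
  by_cases h : y = opp x
  · subst h
    cases hx : sd x <;> simp [hx]
  · simp [h]

theorem TD_mul_zero (G : Matrix (WIdx m) (WIdx m) D) (x y : WIdx m) (h : ps x = 0) :
    (TD D m * G) x y = 0 := by
  simp [Matrix.mul_apply, TD, h]

theorem TD_mul_succ (G : Matrix (WIdx m) (WIdx m) D) (i : Fin s) (σ : Bool) (a : ℕ)
    (h : a + 1 < m i) (y : WIdx m) :
    (TD D m * G) (mkW i σ (a + 1) h) y = G (mkW i σ a (by omega)) y := by
  rw [Matrix.mul_apply, Finset.sum_eq_single (mkW i σ a (by omega))]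
  · simp [TD]
  · intro z _ hz
    obtain ⟨j, τ, b, h', rfl⟩ := exists_mk z
    rw [Ne, mk_inj] at hz
    simp only [TD, Matrix.of_apply, bl_mk, sd_mk, ps_mk]
    rw [if_neg, zero_mul]
    rintro ⟨rfl, rfl, h3⟩
    exact hz ⟨rfl, rfl, by omega⟩
  · simp

theorem mul_TD_top (G : Matrix (WIdx m) (WIdx m) D) (x y : WIdx m) (h : ps y + 1 = m (bl y)) :
    (G * TD D m) x y = 0 := by
  rw [Matrix.mul_apply]
  apply Finset.sum_eq_zero
  intro z _
  simp only [TD, Matrix.of_apply]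
  rw [if_neg, mul_zero]
  rintro ⟨h1, -, h3⟩
  have := ps_lt z
  rw [h1] at this
  omega

theorem mul_TD_succ (G : Matrix (WIdx m) (WIdx m) D) (x : WIdx m) (i : Fin s) (σ : Bool) (a : ℕ)
    (h : a + 1 < m i) :
    (G * TD D m) x (mkW i σ a (by omega)) = G x (mkW i σ (a + 1) h) := by
  rw [Matrix.mul_apply, Finset.sum_eq_single (mkW i σ (a + 1) h)]
  · simp [TD]
  · intro z _ hz
    obtain ⟨j, τ, b, h', rfl⟩ := exists_mk z
    rw [Ne, mk_inj] at hz
    simp only [TD, Matrix.of_apply, bl_mk, sd_mk, ps_mk]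
    rw [if_neg, mul_zero]
    rintro ⟨rfl, rfl, h3⟩
    exact hz ⟨rfl, rfl, by omega⟩
  · simp

theorem UT_apply (i j : Fin s) (σ τ : Bool) (a b : ℕ) (ha : a < m i) (hb : b < m j) :
    (UD D m * TD D m) (mkW i σ a ha) (mkW j τ b hb) =
      if i = j ∧ σ = false ∧ τ = true ∧ a + b + 2 = m i then 1 else 0 := by
  by_cases h : b + 1 < m j
  · rw [mul_TD_succ _ _ _ _ _ h]
    simp only [UD, Matrix.of_apply, sd_mk, opp, bl_mk, ps_mk, mk_inj]
    congr 1
    apply propext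
    constructor
    · rintro ⟨rfl, rfl, rfl, h3⟩
      refine ⟨rfl, rfl, rfl, by omega⟩
    · rintro ⟨rfl, rfl, rfl, h3⟩
      refine ⟨rfl, rfl, rfl, by omega⟩
  · rw [mul_TD_top _ _ _ (by simp; omega), if_neg]
    rintro ⟨rfl, rfl, rfl, h3⟩
    omega

theorem UT_comm : (TD D m)ᵀ * UD D m = UD D m * TD D m := by
  ext x y
  obtain ⟨i, σ, a, ha, rfl⟩ := exists_mk x
  obtain ⟨j, τ, b, hb, rfl⟩ := exists_mk y
  rw [UT_apply, ← Matrix.transpose_apply ((TD D m)ᵀ * UD D m), Matrix.transpose_mul,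
    Matrix.transpose_transpose]
  by_cases h : a + 1 < m i
  · rw [mul_TD_succ _ _ _ _ _ h]
    simp only [UD, Matrix.transpose_apply, Matrix.of_apply, sd_mk, opp, bl_mk, ps_mk, mk_inj]
    congr 1
    apply propext
    constructor
    · rintro ⟨rfl, rfl, rfl, h3⟩
      refine ⟨rfl, rfl, rfl, by omega⟩
    · rintro ⟨rfl, rfl, rfl, h3⟩
      refine ⟨rfl, rfl, rfl, by omega⟩
  · rw [mul_TD_top _ _ _ (by simp; omega), if_neg]
    rintro ⟨rfl, rfl, rfl, h3⟩
    omega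

theorem ST_comm : (TD D m)ᵀ * SD D m = SD D m * TD D m := by
  have h := congrArg Matrix.transpose (UT_comm (D := D) (m := m))
  simp only [Matrix.transpose_mul, Matrix.transpose_transpose] at h
  rw [SD_eq, mul_add, add_mul, UT_comm, h]

theorem DD_transpose : (DD D m l)ᵀ = DD D m l := by
  ext x y
  simp only [DD, Matrix.transpose_apply, Matrix.of_apply]
  by_cases h : x = y
  · subst h; rfl
  · rw [if_neg, if_neg]
    · rintro ⟨h1, -⟩; exact h h1
    · rintro ⟨h1, -⟩; exact h h1.symm

theorem MD_sub [CharP D 2] : MD D m l - (MD D m l)ᵀ = SD D m * TD D m := by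
  have h := congrArg Matrix.transpose (UT_comm (D := D) (m := m))
  simp only [Matrix.transpose_mul, Matrix.transpose_transpose] at h
  rw [MD, Matrix.transpose_add, DD_transpose, Matrix.transpose_mul, ← h, SD_eq, add_mul]
  ext x y
  simp only [Matrix.sub_apply, Matrix.add_apply, CharTwo.sub_eq_add]
  linear_combination CharTwo.add_self_eq_zero (DD D m l x y)

theorem map_sympl {k : Type} [Field k] [Algebra k D] :
    (symplMat k m).map (algebraMap k D) = SD D m := by
  ext x y
  have key : ∀ (i j : Fin s) (a b : ℕ) (σ τ : Bool) (ha : a < m i) (hb : b < m j),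
      SD D m (mkW i σ a ha) (mkW j τ b hb) =
      if i = j ∧ τ = !σ ∧ a + b + 1 = m i then 1 else 0 := by
    intro i j a b σ τ ha hb
    simp only [SD, Matrix.of_apply, opp, bl_mk, sd_mk, ps_mk, mk_inj]
    congr 1
    apply propext
    constructor
    · rintro ⟨rfl, rfl, h3⟩
      refine ⟨rfl, rfl, by omega⟩
    · rintro ⟨rfl, rfl, h3⟩
      refine ⟨rfl, rfl, by omega⟩
  rcases x with ⟨i, a | a⟩ <;> rcases y with ⟨j, b | b⟩
  · change algebraMap k D (0) = SD D m (mkW i false a a.2) (mkW j false b b.2)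
    rw [key]
    simp
  · change algebraMap k D (if i = j ∧ (a : ℕ) + (b : ℕ) + 1 = m i then 1 else 0) = SD D m (mkW i false a a.2) (mkW j true b b.2)
    rw [key]
    simp
  · change algebraMap k D (if i = j ∧ (a : ℕ) + (b : ℕ) + 1 = m i then 1 else 0) = SD D m (mkW i true a a.2) (mkW j false b b.2)
    rw [key]
    simp
  · change algebraMap k D (0) = SD D m (mkW i true a a.2) (mkW j true b b.2)
    rw [key]
    simp

theorem MD_apply (i j : Fin s) (a b : ℕ) (σ τ : Bool) (ha : a < m i) (hb : b < m j) :
    MD D m l (mkW i σ a ha) (mkW j τ b hb) =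
      (if i = j ∧ σ = false ∧ τ = false ∧ a = b ∧ a + 1 = l i then 1 else 0) +
      (if i = j ∧ σ = false ∧ τ = true ∧ a + b + 2 = m i then 1 else 0) := by
  rw [MD, Matrix.add_apply, UT_apply]
  congr 1
  simp only [DD, Matrix.of_apply, bl_mk, sd_mk, ps_mk, mk_inj]
  congr 1
  apply propext
  constructor
  · rintro ⟨⟨rfl, rfl, rfl⟩, rfl, h⟩
    exact ⟨rfl, rfl, rfl, rfl, h⟩
  · rintro ⟨rfl, rfl, rfl, rfl, h⟩
    exact ⟨⟨rfl, rfl, rfl⟩, rfl, h⟩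

theorem map_alpha {k : Type} [Field k] [Algebra k D] :
    (alphaMat k m l).map (algebraMap k D) = MD D m l := by
  ext x y
  rcases x with ⟨i, a | a⟩ <;> rcases y with ⟨j, b | b⟩
  · change algebraMap k D (if i = j ∧ (a : ℕ) = (b : ℕ) ∧ (a : ℕ) + 1 = l i then 1 else 0) = MD D m l (mkW i false a a.2) (mkW j false b b.2)
    rw [MD_apply]
    simp
  · change algebraMap k D (if i = j ∧ (a : ℕ) + (b : ℕ) + 2 = m i then 1 else 0) = MD D m l (mkW i false a a.2) (mkW j true b b.2)
    rw [MD_apply]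
    simp
  · change algebraMap k D (0) = MD D m l (mkW i true a a.2) (mkW j false b b.2)
    rw [MD_apply]
    simp
  · change algebraMap k D (0) = MD D m l (mkW i true a a.2) (mkW j true b b.2)
    rw [MD_apply]
    simp

end Mats

section Cent

variable {D : Type} [CommRing D] {m l : Fin s → ℕ}

/-- Matrices of the centralizer over `D`. -/
structure IsCent (l : Fin s → ℕ) (G : Matrix (WIdx m) (WIdx m) D) : Prop where
  beta : Gᵀ * SD D m * G = SD D m
  symm : (Gᵀ * MD D m l * G + MD D m l)ᵀ = Gᵀ * MD D m l * G + MD D m l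
  diag : ∀ x, (Gᵀ * MD D m l * G + MD D m l) x x = 0

theorem isCent_iff {k : Type} [Field k] [Algebra k D] (y : WIdx m × WIdx m → D) :
    (∀ q ∈ centralizerIdeal k m l, MvPolynomial.aeval y q = 0) ↔
      IsCent l (Matrix.of fun a b => y (a, b)) := by
  let φ : MvPolynomial (WIdx m × WIdx m) k →+* D := (MvPolynomial.aeval y : _ →ₐ[k] D)
  have hG : (genMat k m).map φ = Matrix.of fun a b => y (a, b) := by
    ext a b; simp [genMat, φ]
  have hS : ((symplMat k m).map MvPolynomial.C).map φ = SD D m := by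
    rw [← map_sympl (k := k), Matrix.map_map]
    congr 1
    ext c; simp [φ]
  have hM : ((alphaMat k m l).map MvPolynomial.C).map φ = MD D m l := by
    rw [← map_alpha (k := k), Matrix.map_map]
    congr 1
    ext c; simp [φ]
  set G : Matrix (WIdx m) (WIdx m) D := Matrix.of fun a b => y (a, b) with hGdef
  have h1 : (betaRel k m).map φ = Gᵀ * SD D m * G - SD D m := by
    rw [betaRel, Matrix.map_sub _ (map_sub φ), Matrix.map_mul, Matrix.map_mul,
      Matrix.transpose_map, hG, hS]
  have h2 : (alphaRel k m l).map φ = Gᵀ * MD D m l * G + MD D m l := by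
    rw [alphaRel, Matrix.map_add _ (map_add φ), Matrix.map_mul, Matrix.map_mul,
      Matrix.transpose_map, hG, hM]
  have h1' : ∀ a b, φ (betaRel k m a b) = (Gᵀ * SD D m * G - SD D m) a b := by
    intro a b; rw [← h1]; rfl
  have h2' : ∀ a b, φ (alphaRel k m l a b) = (Gᵀ * MD D m l * G + MD D m l) a b := by
    intro a b; rw [← h2]; rfl
  have key : (∀ q ∈ centralizerIdeal k m l, MvPolynomial.aeval y q = 0) ↔
      centralizerIdeal k m l ≤ RingHom.ker φ := Iff.rfl
  rw [key, centralizerIdeal, Ideal.span_le, Set.union_subset_iff, Set.union_subset_iff]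
  constructor
  · rintro ⟨⟨ha, hb⟩, hc⟩
    refine ⟨?_, ?_, ?_⟩
    · ext a b
      have : φ (betaRel k m a b) = 0 := ha ⟨a, b, rfl⟩
      rw [h1', Matrix.sub_apply, sub_eq_zero] at this
      exact this
    · ext a b
      have : φ ((alphaRel k m l - (alphaRel k m l)ᵀ) b a) = 0 := hb ⟨b, a, rfl⟩
      rw [Matrix.sub_apply, map_sub, Matrix.transpose_apply, h2', h2', sub_eq_zero] at this
      exact this
    · intro a
      have : φ (alphaRel k m l a a) = 0 := hc ⟨a, rfl⟩
      rwa [h2'] at this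
  · rintro ⟨ha, hb, hc⟩
    refine ⟨⟨?_, ?_⟩, ?_⟩
    · rintro _ ⟨a, b, rfl⟩
      change φ _ = 0
      rw [h1', ha, sub_self]; rfl
    · rintro _ ⟨a, b, rfl⟩
      change φ _ = 0
      rw [Matrix.sub_apply, map_sub, Matrix.transpose_apply, h2', h2', sub_eq_zero]
      exact (congrFun (congrFun hb b) a)
    · rintro _ ⟨a, rfl⟩
      change φ _ = 0
      rw [h2', hc]

/-- The inverse of an element of the centralizer. -/
def cinv (G : Matrix (WIdx m) (WIdx m) D) : Matrix (WIdx m) (WIdx m) D :=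
  SD D m * Gᵀ * SD D m

theorem IsCent.cinv_mul {G : Matrix (WIdx m) (WIdx m) D} (hG : IsCent l G) : cinv G * G = 1 := by
  rw [cinv, Matrix.mul_assoc, Matrix.mul_assoc, ← Matrix.mul_assoc Gᵀ, hG.beta, SD_sq]

theorem IsCent.mul_cinv {G : Matrix (WIdx m) (WIdx m) D} (hG : IsCent l G) : G * cinv G = 1 :=
  mul_eq_one_comm.mp hG.cinv_mul

variable [CharP D 2]

theorem add_self_mat {α : Type} (A : Matrix α α D) : A + A = 0 := by
  ext x y
  simp [CharTwo.add_self_eq_zero]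

theorem alt_conj {A : Matrix (WIdx m) (WIdx m) D} (hA : Aᵀ = A) (hd : ∀ x, A x x = 0)
    (G : Matrix (WIdx m) (WIdx m) D) (x : WIdx m) : (Gᵀ * A * G) x x = 0 := by
  have : (Gᵀ * A * G) x x = ∑ p : WIdx m × WIdx m, G p.1 x * A p.1 p.2 * G p.2 x := by
    simp only [Matrix.mul_apply, Matrix.transpose_apply, Finset.sum_mul]
    rw [Finset.sum_comm, ← Finset.univ_product_univ, Finset.sum_product]
  rw [this]
  apply Finset.sum_involution (fun p _ => p.swap)
  · rintro ⟨a, b⟩ -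
    have h : A b a = A a b := congrFun (congrFun hA a) b
    simp only [Prod.swap]
    rw [h]
    linear_combination CharTwo.add_self_eq_zero (G a x * A a b * G b x)
  · rintro ⟨a, b⟩ - h1 h2
    apply h1
    have : b = a := congrArg Prod.fst h2
    subst this
    simp [hd]
  · simp
  · simp

theorem IsCent.one : IsCent l (1 : Matrix (WIdx m) (WIdx m) D) := by
  refine ⟨by simp, ?_, ?_⟩
  · simp [add_self_mat]
  · intro x
    rw [Matrix.transpose_one, Matrix.one_mul, Matrix.mul_one, add_self_mat]
    rfl

theorem IsCent.mul {G H : Matrix (WIdx m) (WIdx m) D} (hG : IsCent l G) (hH : IsCent l H) :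
    IsCent l (G * H) := by
  have e : (G * H)ᵀ * MD D m l * (G * H) + MD D m l =
      Hᵀ * (Gᵀ * MD D m l * G + MD D m l) * H + (Hᵀ * MD D m l * H + MD D m l) := by
    have h0 := add_self_mat (Hᵀ * MD D m l * H)
    have : (G * H)ᵀ * MD D m l * (G * H) = Hᵀ * (Gᵀ * MD D m l * G) * H := by
      simp only [Matrix.transpose_mul, Matrix.mul_assoc]
    rw [this, mul_add, add_mul]
    rw [add_assoc, ← add_assoc (Hᵀ * MD D m l * H), h0, zero_add]
  refine ⟨?_, ?_, ?_⟩
  · have : (G * H)ᵀ * SD D m * (G * H) = Hᵀ * (Gᵀ * SD D m * G) * H := by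
      simp only [Matrix.transpose_mul, Matrix.mul_assoc]
    rw [this, hG.beta, hH.beta]
  · rw [e, Matrix.transpose_add, hH.symm, Matrix.transpose_mul, Matrix.transpose_mul, hG.symm,
      Matrix.transpose_transpose, ← Matrix.mul_assoc]
  · intro x
    rw [e, Matrix.add_apply, hH.diag, alt_conj hG.symm hG.diag, add_zero]

theorem IsCent.inv {G : Matrix (WIdx m) (WIdx m) D} (hG : IsCent l G) : IsCent l (cinv G) := by
  have h1 := hG.mul_cinv
  have h2 : (cinv G)ᵀ * Gᵀ = 1 := by rw [← Matrix.transpose_mul, h1, Matrix.transpose_one]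
  have e : (cinv G)ᵀ * MD D m l * cinv G + MD D m l =
      (cinv G)ᵀ * (Gᵀ * MD D m l * G + MD D m l) * cinv G := by
    have : (cinv G)ᵀ * (Gᵀ * MD D m l * G) * cinv G =
        ((cinv G)ᵀ * Gᵀ) * MD D m l * (G * cinv G) := by
      simp only [Matrix.mul_assoc]
    rw [mul_add, add_mul, this, h1, h2, Matrix.one_mul, Matrix.mul_one, add_comm]
  refine ⟨?_, ?_, ?_⟩
  · conv_lhs => rw [← hG.beta]
    have : (cinv G)ᵀ * (Gᵀ * SD D m * G) * cinv G =
        ((cinv G)ᵀ * Gᵀ) * SD D m * (G * cinv G) := by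
      simp only [Matrix.mul_assoc]
    rw [this, h1, h2, Matrix.one_mul, Matrix.mul_one]
  · rw [e, Matrix.transpose_mul, Matrix.transpose_mul, hG.symm,
      Matrix.transpose_transpose, ← Matrix.mul_assoc]
  · intro x
    rw [e, alt_conj hG.symm hG.diag]

theorem IsCent.comm {G : Matrix (WIdx m) (WIdx m) D} (hG : IsCent l G) :
    TD D m * G = G * TD D m := by
  have h := hG.symm
  have h1 : Gᵀ * (SD D m * TD D m) * G = SD D m * TD D m := by
    rw [← MD_sub (l := l), mul_sub, sub_mul]
    rw [Matrix.transpose_add, Matrix.transpose_mul, Matrix.transpose_mul,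
      Matrix.transpose_transpose, ← Matrix.mul_assoc] at h
    have h0 := add_self_mat (MD D m l)
    have h0' := add_self_mat (MD D m l)ᵀ
    have e1 : Gᵀ * MD D m l * G + MD D m l - (Gᵀ * (MD D m l)ᵀ * G + (MD D m l)ᵀ) = 0 := by
      rw [h, sub_self]
    have e2 : Gᵀ * MD D m l * G - Gᵀ * (MD D m l)ᵀ * G - (MD D m l - (MD D m l)ᵀ) =
      (Gᵀ * MD D m l * G + MD D m l - (Gᵀ * (MD D m l)ᵀ * G + (MD D m l)ᵀ))
        - (MD D m l + MD D m l) + ((MD D m l)ᵀ + (MD D m l)ᵀ) := by abel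
    rw [e1, h0, h0', sub_zero, zero_add, sub_eq_zero] at e2
    exact e2
  have h2 : Gᵀ * SD D m * (TD D m * G) = Gᵀ * SD D m * (G * TD D m) := by
    rw [← Matrix.mul_assoc _ G, hG.beta, ← h1]
    simp only [Matrix.mul_assoc]
  have h3 : ∀ X, G * (SD D m * (Gᵀ * SD D m * X)) = X := by
    intro X
    have : G * (SD D m * (Gᵀ * SD D m * X)) = (G * cinv G) * X := by
      simp only [cinv, Matrix.mul_assoc]
    rw [this, hG.mul_cinv, Matrix.one_mul]
  rw [← h3 (TD D m * G), h2, h3]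

end Cent

section Upper

variable {D : Type} [CommRing D] {m l : Fin s → ℕ}

theorem toeplitz {G : Matrix (WIdx m) (WIdx m) D} (hG : TD D m * G = G * TD D m)
    (i j : Fin s) (σ τ : Bool) (a : ℕ) : ∀ (b : ℕ) (ha : a < m i) (hb : b < m j),
    G (mkW j τ b hb) (mkW i σ a ha) =
      if a ≤ b then G (mkW j τ (b - a) (by omega)) (mkW i σ 0 (by omega)) else 0 := by
  induction a with
  | zero => intro b ha hb; simp
  | succ a ih =>
    intro b ha hb
    have h := congrFun (congrFun hG (mkW j τ b hb)) (mkW i σ a (by omega))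
    rw [mul_TD_succ _ _ _ _ _ ha] at h
    rw [← h]
    cases b with
    | zero => rw [TD_mul_zero _ _ _ (by simp)]; simp
    | succ b =>
      rw [TD_mul_succ, ih]
      simp

theorem csys [IsDomain D] (c : ℕ → D) (m l : ℕ) (h0 : ∀ p, l ≤ p → c p = 0)
    (h : ∀ p, p < l → c p ^ 2 = if 2 * l ≤ m + 2 * p then c (m + 2 * p - 2 * l) else 0) (p : ℕ) :
    c p = 0 ∨ c p = 1 := by
  rcases lt_trichotomy (p + m) (2 * l) with hp | hp | hp
  · left
    induction p using Nat.strong_induction_on with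
    | _ p ih =>
      by_cases hl : l ≤ p
      · exact h0 p hl
      · have := h p (by omega)
        split_ifs at this with hc
        · rw [ih (m + 2 * p - 2 * l) (by omega) (by omega)] at this
          exact pow_eq_zero_iff (two_ne_zero) |>.mp this
        · exact pow_eq_zero_iff (two_ne_zero) |>.mp this
  · by_cases hl : l ≤ p
    · exact Or.inl (h0 p hl)
    · have := h p (by omega)
      rw [if_pos (by omega), show m + 2 * p - 2 * l = p by omega] at this
      have h2 : c p * (c p - 1) = 0 := by linear_combination this
      rcases mul_eq_zero.mp h2 with h3 | h3
      · exact Or.inl h3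
      · exact Or.inr (sub_eq_zero.mp h3)
  · left
    obtain ⟨n, hn⟩ : ∃ n, n = l - p := ⟨_, rfl⟩
    induction n using Nat.strong_induction_on generalizing p with
    | _ n ih =>
      by_cases hl : l ≤ p
      · exact h0 p hl
      · have := h p (by omega)
        rw [if_pos (by omega)] at this
        rw [ih (l - (m + 2 * p - 2 * l)) (by omega) (m + 2 * p - 2 * l) (by omega) rfl] at this
        exact pow_eq_zero_iff (two_ne_zero) |>.mp this

theorem quad_apply (G : Matrix (WIdx m) (WIdx m) D) (x : WIdx m) :
    (Gᵀ * MD D m l * G) x x =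
      (∑ u, if sd u = false ∧ ps u + 1 = l (bl u) then G u x ^ 2 else 0) +
      ∑ u, ∑ z, G u x * (UD D m * TD D m) u z * G z x := by
  rw [MD, mul_add, add_mul, Matrix.add_apply]
  congr 1
  · have hd : DD D m l =
        Matrix.diagonal fun u => if sd u = false ∧ ps u + 1 = l (bl u) then (1 : D) else 0 := by
      ext u z
      simp only [DD, Matrix.of_apply, Matrix.diagonal_apply]
      by_cases h : u = z <;> simp [h]
    rw [hd, Matrix.mul_apply]
    apply Finset.sum_congr rfl
    intro u _
    rw [Matrix.mul_diagonal, Matrix.transpose_apply]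
    split_ifs <;> ring
  · simp only [Matrix.mul_apply (M := Gᵀ * (UD D m * TD D m)), Finset.sum_mul,
      Matrix.mul_apply (M := Gᵀ), Matrix.transpose_apply]
    rw [Finset.sum_comm]

theorem upper_key [IsDomain D] [CharP D 2] (hm0 : ∀ i, 0 < m i) (hlm : ∀ i, l i ≤ m i)
    {G : Matrix (WIdx m) (WIdx m) D} (hG : IsCent l G)
    (f1 : ∀ (i j : Fin s) (σ τ : Bool) (c : ℕ) (hc : c < m j), i < j →
      G (mkW j σ c hc) (mkW i τ 0 (hm0 i)) = 0)
    (f2 : ∀ (i : Fin s) (c : ℕ) (hc : c < m i),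
      G (mkW i true c hc) (mkW i false 0 (hm0 i)) = 0)
    (f3 : ∀ (i : Fin s) (τ : Bool) (c : ℕ) (hc : c < m i), l i ≤ c →
      G (mkW i false c hc) (mkW i τ 0 (hm0 i)) =
        (1 : Matrix (WIdx m) (WIdx m) D) (mkW i false c hc) (mkW i τ 0 (hm0 i))) :
    ∀ x y, G x y = 0 ∨ G x y = 1 := by
  have hT := toeplitz hG.comm
  -- block triangular
  have hup : ∀ x y, bl y < bl x → G x y = 0 := by
    intro x y hxy
    obtain ⟨j, τ, b, hb, rfl⟩ := exists_mk x
    obtain ⟨i, σ, a, ha, rfl⟩ := exists_mk y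
    simp only [bl_mk] at hxy
    rw [hT]
    split_ifs
    · exact f1 _ _ _ _ _ _ hxy
    · rfl
  have hlow : ∀ x y, bl x < bl y → G x y = 0 := by
    intro x y hxy
    let _ : Invertible G := ⟨cinv G, hG.cinv_mul, hG.mul_cinv⟩
    have hbt : G.BlockTriangular bl := fun x y h => hup x y h
    have := Matrix.blockTriangular_inv_of_blockTriangular hbt
    have e : G⁻¹ = cinv G := Matrix.inv_eq_left_inv hG.cinv_mul
    rw [e] at this
    have h2 := @this (opp y) (opp x) (by simpa using hxy)
    rw [cinv, mul_SD, SD_mul, Matrix.transpose_apply] at h2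
    simpa using h2
  have hblk : ∀ x y, bl x ≠ bl y → G x y = 0 := by
    intro x y h
    rcases lt_or_gt_of_ne h with h | h
    · exact hlow x y h
    · exact hup x y h
  have hb0 : ∀ i c hc e he, G (mkW i true c hc) (mkW i false e he) = 0 := by
    intro i c hc e he
    rw [hT]
    split_ifs
    · exact f2 _ _ _
    · rfl
  -- the column of `v`
  have ha : ∀ i c hc, G (mkW i false c hc) (mkW i false 0 (hm0 i)) = if c = 0 then 1 else 0 := by
    intro i c hc
    by_cases hcl : l i ≤ c
    · rw [f3 i false c hc hcl]
      simp [Matrix.one_apply, mk_inj]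
    · push Not at hcl
      have hd := hG.diag (mkW i false (l i - 1 - c) (by have := hlm i; omega))
      rw [Matrix.add_apply, quad_apply, MD_apply] at hd
      rw [Finset.sum_eq_single (mkW i false (l i - 1) (by have := hlm i; omega))] at hd
      · rw [Finset.sum_eq_zero] at hd
        · rw [hT i i false false (l i - 1 - c) (l i - 1) _ _,
            if_pos (show l i - 1 - c ≤ l i - 1 by omega)] at hd
          simp only [sd_mk, ps_mk, bl_mk] at hd
          have e : l i - 1 - (l i - 1 - c) = c := by omega
          simp only [e] at hd
          rw [if_pos ⟨trivial, by omega⟩] at hd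
          by_cases h0 : c = 0
          · rw [if_pos (by simp; omega), if_neg (by simp)] at hd
            rw [if_pos h0]
            have h2 : (G (mkW i false c hc) (mkW i false 0 (hm0 i)) - 1) ^ 2 = 0 := by
              have t2 : (2 : D) = 0 := CharTwo.two_eq_zero
              linear_combination hd - G (mkW i false c hc) (mkW i false 0 (hm0 i)) * t2
            exact sub_eq_zero.mp ((pow_eq_zero_iff two_ne_zero).mp h2)
          · rw [if_neg (by simp; omega), if_neg (by simp)] at hd
            rw [if_neg h0]
            simpa using hd
        · intro u _
          apply Finset.sum_eq_zero
          intro z _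
          obtain ⟨j, τ, b, hb, rfl⟩ := exists_mk u
          obtain ⟨j', τ', b', hb', rfl⟩ := exists_mk z
          rw [UT_apply]
          split_ifs with hc
          · obtain ⟨rfl, rfl, rfl, -⟩ := hc
            by_cases hij : j = i
            · subst hij
              rw [hb0, mul_zero]
            · rw [hblk _ _ (by simpa using hij)]; simp
          · simp
      · intro u _ hu
        obtain ⟨j, τ, b, hb, rfl⟩ := exists_mk u
        rw [Ne, mk_inj] at hu
        simp only [sd_mk, ps_mk, bl_mk]
        split_ifs with hc
        · obtain ⟨rfl, h1⟩ := hc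
          by_cases hij : j = i
          · subst hij
            exact absurd ⟨rfl, rfl, by omega⟩ hu
          · rw [hblk _ _ (by simpa using hij)]; simp
        · rfl
      · simp
  have hv : ∀ x i e he, G x (mkW i false e he) = if x = mkW i false e he then 1 else 0 := by
    intro x i e he
    obtain ⟨j, τ, b, hb, rfl⟩ := exists_mk x
    by_cases hij : j = i
    · subst hij
      cases τ with
      | true => rw [hb0, if_neg]; rw [mk_inj]; simp
      | false =>
        rw [hT]
        simp only [mk_inj, true_and]
        split_ifs with h1 h2 h2
        · rw [ha, if_pos (by omega)]
        · rw [ha, if_neg (by omega)]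
        · omega
        · rfl
    · rw [hblk _ _ (by simpa using hij), if_neg]
      rw [mk_inj]
      rintro ⟨rfl, -⟩
      exact hij rfl
  -- the `w` rows
  have hw : ∀ i b hb y, G (mkW i true b hb) y = if y = mkW i true b hb then 1 else 0 := by
    intro i b hb y
    obtain ⟨b', hb', he⟩ : ∃ b', ∃ hb' : b' < m i, opp (mkW i false b' hb') = mkW i true b hb := by
      refine ⟨m i - 1 - b, by omega, ?_⟩
      simp only [opp, bl_mk, sd_mk, ps_mk, mk_inj]
      refine ⟨trivial, rfl, by omega⟩
    have h := congrFun (congrFun hG.beta (mkW i false b' hb')) y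
    rw [Matrix.mul_assoc, Matrix.mul_apply, Finset.sum_eq_single (mkW i false b' hb')] at h
    · rw [Matrix.transpose_apply, hv, if_pos rfl, one_mul, SD_mul, he] at h
      rw [h]
      simp only [SD, Matrix.of_apply, he]
    · intro u _ hu
      rw [Matrix.transpose_apply, hv, if_neg hu, zero_mul]
    · simp
  -- the `w` columns
  have hc : ∀ i p hp, G (mkW i false p hp) (mkW i true 0 (hm0 i)) = 0 ∨
      G (mkW i false p hp) (mkW i true 0 (hm0 i)) = 1 := by
    intro i p hp
    let c : ℕ → D := fun p =>
      if hp : p < m i then G (mkW i false p hp) (mkW i true 0 (hm0 i)) else 0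
    have key := csys c (m i) (l i) (by
      intro p hp
      simp only [c]
      split_ifs with h
      · rw [f3 _ _ _ _ hp, Matrix.one_apply, if_neg]
        rw [mk_inj]; simp
      · rfl) (by
      intro p hp
      have hlmi := hlm i
      have hd := hG.diag (mkW i true (l i - 1 - p) (by omega))
      rw [Matrix.add_apply, quad_apply, MD_apply] at hd
      rw [Finset.sum_eq_single (mkW i false (l i - 1) (by omega))] at hd
      · rw [hT i i true false (l i - 1 - p) (l i - 1) _ _,
          if_pos (show l i - 1 - p ≤ l i - 1 by omega)] at hd
        have e : l i - 1 - (l i - 1 - p) = p := by omega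
        simp only [e] at hd
        have hcp : c p = G (mkW i false p (by omega)) (mkW i true 0 (hm0 i)) := by
          simp only [c]; rw [dif_pos]
        rw [← hcp] at hd
        simp only [sd_mk, ps_mk, bl_mk] at hd
        rw [if_pos ⟨trivial, by omega⟩, if_neg (by simp), if_neg (by simp), add_zero, add_zero] at hd
        have hsum : (∑ u, ∑ z, G u (mkW i true (l i - 1 - p) (by omega)) * (UD D m * TD D m) u z *
            G z (mkW i true (l i - 1 - p) (by omega))) =
            if 2 * l i ≤ m i + 2 * p then c (m i + 2 * p - 2 * l i) else 0 := by
          have inner : ∀ u, ∑ z, G u (mkW i true (l i - 1 - p) (by omega)) *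
              (UD D m * TD D m) u z * G z (mkW i true (l i - 1 - p) (by omega)) =
              G u (mkW i true (l i - 1 - p) (by omega)) *
                (UD D m * TD D m) u (mkW i true (l i - 1 - p) (by omega)) := by
            intro u
            rw [Finset.sum_eq_single (mkW i true (l i - 1 - p) (by omega))]
            · rw [hw, if_pos rfl, mul_one]
            · intro z _ hz
              obtain ⟨j, τ, b, hb, rfl⟩ := exists_mk z
              cases τ with
              | false =>
                obtain ⟨j', τ', b', hb', rfl⟩ := exists_mk u
                rw [UT_apply, if_neg (by simp)]; simp
              | true => rw [hw, if_neg (Ne.symm hz), mul_zero]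
            · simp
          rw [Finset.sum_congr rfl (fun u _ => inner u)]
          split_ifs with h2
          · by_cases h3 : m i = 0
            · have := hm0 i; omega
            rw [Finset.sum_eq_single (mkW i false (m i - 2 - (l i - 1 - p)) (by omega))]
            · rw [UT_apply, if_pos ⟨rfl, rfl, rfl, by omega⟩, mul_one, hT]
              rw [if_pos (by omega)]
              simp only [c]
              rw [dif_pos (by omega)]
              congr 2
              omega
            · intro u _ hu
              obtain ⟨j, τ, b, hb, rfl⟩ := exists_mk u
              rw [UT_apply]
              split_ifs with h4
              · obtain ⟨rfl, rfl, -, h5⟩ := h4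
                exact absurd (mk_inj.mpr ⟨rfl, rfl, by omega⟩) hu
              · simp
            · simp
          · apply Finset.sum_eq_zero
            intro u _
            obtain ⟨j, τ, b, hb, rfl⟩ := exists_mk u
            rw [UT_apply]
            split_ifs with h4
            · obtain ⟨rfl, rfl, -, h5⟩ := h4
              rw [hT, if_neg (by omega), zero_mul]
            · simp
        rw [hsum] at hd
        exact CharTwo.add_eq_zero.mp hd
      · intro u _ hu
        obtain ⟨j, τ, b, hb, rfl⟩ := exists_mk u
        rw [Ne, mk_inj] at hu
        simp only [sd_mk, ps_mk, bl_mk]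
        split_ifs with hc
        · obtain ⟨rfl, h1⟩ := hc
          by_cases hij : j = i
          · subst hij
            exact absurd ⟨rfl, rfl, by omega⟩ hu
          · rw [hblk _ _ (by simpa using hij)]; simp
        · rfl
      · simp) p
    simpa only [c, dif_pos hp] using key
  intro x y
  obtain ⟨j, τ, b, hb, rfl⟩ := exists_mk x
  obtain ⟨i, σ, a, ha', rfl⟩ := exists_mk y
  cases σ with
  | false => rw [hv]; split_ifs <;> simp
  | true =>
    cases τ with
    | true => rw [hw]; split_ifs <;> simp
    | false =>
      by_cases hij : j = i
      · subst hij
        rw [hT]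
        split_ifs
        · exact hc _ _ _
        · exact Or.inl rfl
      · exact Or.inl (hblk _ _ (by simpa using hij))

end Upper

section UpperAssembly

variable {m l : Fin s → ℕ}

/-- Index set of the linear conditions cutting the centralizer down to finitely many points. -/
abbrev FIdx (m l : Fin s → ℕ) : Type :=
  (Σ j : Fin s, Fin j × Bool × Bool × Fin (m j)) ⊕ (Σ i : Fin s, Fin (m i)) ⊕
    (Σ i : Fin s, Bool × Fin (m i - l i))

/-- Position of a linear condition. -/
def fpos (hm0 : ∀ i, 0 < m i) : FIdx m l → WIdx m × WIdx m
  | Sum.inl ⟨j, i, σ, τ, c⟩ =>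
      (mkW j σ c c.2, mkW ⟨i, i.2.trans j.2⟩ τ 0 (hm0 _))
  | Sum.inr (Sum.inl ⟨i, c⟩) => (mkW i true c c.2, mkW i false 0 (hm0 _))
  | Sum.inr (Sum.inr ⟨i, τ, c⟩) =>
      (mkW i false (l i + c) (by have := c.2; omega), mkW i τ 0 (hm0 _))

theorem IsCent.map {D : Type} [CommRing D] [Algebra k D] {G : Matrix (WIdx m) (WIdx m) k}
    (hG : IsCent l G) : IsCent l (G.map (algebraMap k D)) := by
  have h := (isCent_iff (k := k) (D := k) (l := l) (fun p : WIdx m × WIdx m => G p.1 p.2)).2 hG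
  refine (isCent_iff (k := k) (D := D) (l := l)
    (fun p : WIdx m × WIdx m => algebraMap k D (G p.1 p.2))).1 ?_
  intro q hq
  have := MvPolynomial.aeval_algebraMap_apply D (fun p : WIdx m × WIdx m => G p.1 p.2) q
  rw [h q hq, map_zero] at this
  exact this

theorem upper_bound [CharP k 2] [IsAlgClosed k] (hm0 : ∀ i, 0 < m i) (hlm : ∀ i, l i ≤ m i) :
    ringKrullDim (MvPolynomial (WIdx m × WIdx m) k ⧸ centralizerIdeal k m l) ≤
      (Nat.card (FIdx m l) : WithBot ℕ∞) := by
  apply dim_upper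
  intro x hx
  have hg := (isCent_iff x).1 hx
  set g : Matrix (WIdx m) (WIdx m) k := Matrix.of fun a b => x (a, b) with hgdef
  let P : Matrix (WIdx m) (WIdx m) (MvPolynomial (WIdx m × WIdx m) k) :=
    (cinv g).map MvPolynomial.C * genMat k m - 1
  have hP : ∀ (D : Type) [CommRing D] [Algebra k D] (y : WIdx m × WIdx m → D) a b,
      MvPolynomial.aeval y (P a b) =
        ((cinv g).map (algebraMap k D) * (Matrix.of fun a b => y (a, b)) - 1) a b := by
    intro D _ _ y a b
    simp only [P, Matrix.sub_apply, map_sub, Matrix.mul_apply, map_sum, map_mul, Matrix.map_apply,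
      genMat, Matrix.of_apply, MvPolynomial.aeval_X, MvPolynomial.aeval_C, Matrix.one_apply]
    congr 1
    split_ifs <;> simp
  refine ⟨fun f => P (fpos hm0 f).1 (fpos hm0 f).2, ?_, ?_⟩
  · intro f
    rw [hP]
    have : (cinv g).map (algebraMap k k) = cinv g := by ext; simp
    rw [this, ← hgdef, hg.cinv_mul, sub_self]
    rfl
  · intro D _ _ _ y hy hf c
    have : CharP D 2 := charP_of_injective_algebraMap (algebraMap k D).injective 2
    have hG := (isCent_iff y).1 hy
    have hH : IsCent l ((cinv g).map (algebraMap k D) * (Matrix.of fun a b => y (a, b))) :=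
      (hg.inv.map).mul hG
    have hf' : ∀ f, ((cinv g).map (algebraMap k D) * (Matrix.of fun a b => y (a, b)))
        (fpos hm0 f).1 (fpos (l := l) hm0 f).2 =
        (1 : Matrix (WIdx m) (WIdx m) D) (fpos hm0 f).1 (fpos hm0 f).2 := by
      intro f
      have := hf f
      rw [hP, Matrix.sub_apply, sub_eq_zero] at this
      exact this
    have key := upper_key hm0 hlm hH
      (by
        intro i j σ τ c hc hij
        have := hf' (Sum.inl ⟨j, ⟨i, hij⟩, σ, τ, ⟨c, hc⟩⟩)
        refine this.trans ?_
        change (1 : Matrix (WIdx m) (WIdx m) D) (mkW j σ c hc) (mkW i τ 0 (hm0 i)) = 0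
        rw [Matrix.one_apply, if_neg]
        rw [mk_inj]
        rintro ⟨h, -⟩
        rw [h] at hij
        exact lt_irrefl _ hij)
      (by
        intro i c hc
        have := hf' (Sum.inr (Sum.inl ⟨i, ⟨c, hc⟩⟩))
        refine this.trans ?_
        change (1 : Matrix (WIdx m) (WIdx m) D) (mkW i true c hc) (mkW i false 0 (hm0 i)) = 0
        rw [Matrix.one_apply, if_neg]
        rw [mk_inj]
        simp)
      (by
        intro i τ c hc hlc
        obtain ⟨d, rfl⟩ := Nat.exists_eq_add_of_le hlc
        exact hf' (Sum.inr (Sum.inr ⟨i, τ, ⟨d, by omega⟩⟩)))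
    have e : (Matrix.of fun a b => y (a, b)) = g.map (algebraMap k D) *
        ((cinv g).map (algebraMap k D) * (Matrix.of fun a b => y (a, b))) := by
      rw [← Matrix.mul_assoc, ← Matrix.map_mul, hg.mul_cinv, Matrix.map_one _ (map_zero _) (map_one _),
        Matrix.one_mul]
    obtain ⟨a, b⟩ := c
    have e2 : y (a, b) = _ := congrFun (congrFun e a) b
    rw [e2, Matrix.mul_apply]
    change _ ∈ (algebraMap k D).range
    apply Subring.sum_mem
    intro z _
    apply Subring.mul_mem
    · exact ⟨g a z, rfl⟩
    · rcases key z b with h | h <;> rw [h]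
      · exact Subring.zero_mem _
      · exact Subring.one_mem _

end UpperAssembly

section Lower

variable {D : Type} [CommRing D] {m l : Fin s → ℕ}

/-- Extension of a block by zero. -/
def xt (L : Matrix (WIdx m) (WIdx m) D) (i : Fin s) (σ : Bool) (j : Fin s) (τ : Bool)
    (a b : ℕ) : D :=
  if h : a < m i ∧ b < m j then L (mkW i σ a h.1) (mkW j τ b h.2) else 0

theorem mul_TD_xt (G : Matrix (WIdx m) (WIdx m) D) (i j : Fin s) (σ τ : Bool) (a b : ℕ)
    (ha : a < m i) (hb : b < m j) :
    (G * TD D m) (mkW i σ a ha) (mkW j τ b hb) = xt G i σ j τ a (b + 1) := by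
  rw [xt]
  split_ifs with h
  · exact mul_TD_succ _ _ _ _ _ h.2
  · exact mul_TD_top _ _ _ (by simp; omega)

theorem xt_transpose (G : Matrix (WIdx m) (WIdx m) D) (i j : Fin s) (σ τ : Bool) (a b : ℕ) :
    xt Gᵀ i σ j τ a b = xt G j τ i σ b a := by
  simp only [xt, Matrix.transpose_apply, and_comm]

theorem xt_step {L : Matrix (WIdx m) (WIdx m) D} (hL : (TD D m)ᵀ * L = L * TD D m)
    (i j : Fin s) (σ τ : Bool) (a b : ℕ) :
    xt L i σ j τ (a + 1) b = xt L i σ j τ a (b + 1) := by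
  by_cases h : a < m i ∧ b < m j
  · have h1 := congrFun (congrFun hL (mkW i σ a h.1)) (mkW j τ b h.2)
    rw [mul_TD_xt, ← Matrix.transpose_apply ((TD D m)ᵀ * L), Matrix.transpose_mul,
      Matrix.transpose_transpose, mul_TD_xt, xt_transpose] at h1
    exact h1
  · rw [xt, xt, dif_neg (by omega), dif_neg (by omega)]

theorem xt_hankel {L : Matrix (WIdx m) (WIdx m) D} (hL : (TD D m)ᵀ * L = L * TD D m)
    (i j : Fin s) (σ τ : Bool) (b : ℕ) : ∀ a,
    xt L i σ j τ a b = xt L i σ j τ (a + b) 0 := by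
  induction b with
  | zero => intro a; rfl
  | succ b ih =>
    intro a
    rw [← xt_step hL, ih]
    congr 1
    omega

theorem xt_mk (L : Matrix (WIdx m) (WIdx m) D) (i j : Fin s) (σ τ : Bool) (a b : ℕ)
    (ha : a < m i) (hb : b < m j) :
    L (mkW i σ a ha) (mkW j τ b hb) = xt L i σ j τ a b := by
  rw [xt, dif_pos ⟨ha, hb⟩]

theorem hank_zero {L : Matrix (WIdx m) (WIdx m) D} (hL : (TD D m)ᵀ * L = L * TD D m)
    (hm0 : ∀ i, 0 < m i) (i j : Fin s) (σ τ : Bool)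
    (h : ∀ a ha, L (mkW i σ a ha) (mkW j τ 0 (hm0 j)) = 0) (a b : ℕ)
    (ha : a < m i) (hb : b < m j) : L (mkW i σ a ha) (mkW j τ b hb) = 0 := by
  rw [xt_mk L, xt_hankel hL, xt]
  split_ifs with h1
  · exact h _ _
  · rfl

theorem hank_symm {L : Matrix (WIdx m) (WIdx m) D} (hL : (TD D m)ᵀ * L = L * TD D m)
    (i : Fin s) (σ : Bool) (a b : ℕ) (ha : a < m i) (hb : b < m i) :
    L (mkW i σ a ha) (mkW i σ b hb) = L (mkW i σ b hb) (mkW i σ a ha) := by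
  rw [xt_mk L, xt_mk L, xt_hankel hL, xt_hankel hL _ _ _ _ a, add_comm]

theorem hank_conj {G L : Matrix (WIdx m) (WIdx m) D} (hG : TD D m * G = G * TD D m)
    (hL : (TD D m)ᵀ * L = L * TD D m) :
    (TD D m)ᵀ * (Gᵀ * L * G - L) = (Gᵀ * L * G - L) * TD D m := by
  have h : Gᵀ * (TD D m)ᵀ = (TD D m)ᵀ * Gᵀ := by
    rw [← Matrix.transpose_mul, hG, Matrix.transpose_mul]
  rw [mul_sub, sub_mul, hL]
  congr 1
  calc (TD D m)ᵀ * (Gᵀ * L * G) = ((TD D m)ᵀ * Gᵀ) * L * G := by simp only [Matrix.mul_assoc]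
    _ = Gᵀ * ((TD D m)ᵀ * L) * G := by rw [← h]; simp only [Matrix.mul_assoc]
    _ = Gᵀ * L * (TD D m * G) := by rw [hL]; simp only [Matrix.mul_assoc]
    _ = Gᵀ * L * G * TD D m := by rw [hG]; simp only [Matrix.mul_assoc]

theorem lower_key [CharP D 2] (hm0 : ∀ i, 0 < m i) (hmono : Antitone m) (hlmono : Antitone l)
    (hmlmono : Antitone fun i => m i - l i)
    (hbound : ∀ i, m i / 2 ≤ l i ∧ l i ≤ m i)
    (hfun : ∀ i j, m i = m j → l i = l j)
    {G : Matrix (WIdx m) (WIdx m) D} (hG : TD D m * G = G * TD D m)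
    (hG0 : ∀ x y, ¬ (ps y + (m (bl x) - m (bl y)) ≤ ps x) → G x y = 0)
    (e1 : ∀ (i j : Fin s) (σ τ : Bool) (a : ℕ) (ha : a < m j), i < j →
      (Gᵀ * SD D m * G - SD D m) (mkW j τ a ha) (mkW i σ 0 (hm0 i)) = 0)
    (e2 : ∀ (i : Fin s) (a : ℕ) (ha : a < m i),
      (Gᵀ * SD D m * G - SD D m) (mkW i false a ha) (mkW i true 0 (hm0 i)) = 0)
    (e3 : ∀ (i : Fin s) (σ : Bool) (a : ℕ) (ha : a < m i), a < l i →
      (Gᵀ * MD D m l * G + MD D m l) (mkW i σ a ha) (mkW i σ a ha) = 0) :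
    IsCent l G := by
  have hA := hank_conj hG (ST_comm (D := D) (m := m))
  have hAs : ∀ x y, (Gᵀ * SD D m * G - SD D m) x y = (Gᵀ * SD D m * G - SD D m) y x := by
    intro x y
    rw [← Matrix.transpose_apply (Gᵀ * SD D m * G - SD D m) x y, Matrix.transpose_sub,
      Matrix.transpose_mul, Matrix.transpose_mul, Matrix.transpose_transpose, SD_transpose,
      Matrix.mul_assoc]
  have hlt : ∀ (i j : Fin s) (σ τ : Bool) (a b : ℕ) (ha : a < m j) (hb : b < m i), i < j →
      (Gᵀ * SD D m * G - SD D m) (mkW j τ a ha) (mkW i σ b hb) = 0 :=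
    fun i j σ τ a b ha hb hij =>
      hank_zero hA hm0 j i τ σ (fun a ha => e1 i j σ τ a ha hij) a b ha hb
  have hvw : ∀ (i : Fin s) (a b : ℕ) (ha : a < m i) (hb : b < m i),
      (Gᵀ * SD D m * G - SD D m) (mkW i false a ha) (mkW i true b hb) = 0 :=
    fun i a b ha hb => hank_zero hA hm0 i i false true (fun a ha => e2 i a ha) a b ha hb
  have hU := hank_conj hG (UT_comm (D := D) (m := m))
  have hSU : Gᵀ * SD D m * G - SD D m =
      (Gᵀ * UD D m * G - UD D m) + (Gᵀ * UD D m * G - UD D m)ᵀ := by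
    rw [SD_eq, Matrix.transpose_sub, Matrix.transpose_mul, Matrix.transpose_mul,
      Matrix.transpose_transpose, mul_add, add_mul, Matrix.mul_assoc Gᵀ (UD D m)ᵀ]
    abel
  have hbeta : Gᵀ * SD D m * G = SD D m := by
    rw [← sub_eq_zero]
    ext x y
    obtain ⟨j, τ, a, ha, rfl⟩ := exists_mk x
    obtain ⟨i, σ, b, hb, rfl⟩ := exists_mk y
    rw [Matrix.zero_apply]
    rcases lt_trichotomy i j with hij | hij | hij
    · exact hlt _ _ _ _ _ _ _ _ hij
    · subst hij
      by_cases hst : σ = τ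
      · subst hst
        rw [hSU, Matrix.add_apply, Matrix.transpose_apply, hank_symm hU i σ b a,
          CharTwo.add_self_eq_zero]
      · cases σ <;> cases τ
        · exact absurd rfl hst
        · rw [hAs]; exact hvw _ _ _ _ _
        · exact hvw _ _ _ _ _
        · exact absurd rfl hst
    · rw [hAs]
      exact hlt _ _ _ _ _ _ _ _ hij
  refine ⟨hbeta, ?_, ?_⟩
  · have hM := MD_sub (D := D) (m := m) (l := l)
    have h1 : (Gᵀ * MD D m l * G + MD D m l) - (Gᵀ * MD D m l * G + MD D m l)ᵀ = 0 := by
      have : (Gᵀ * MD D m l * G + MD D m l) - (Gᵀ * MD D m l * G + MD D m l)ᵀ =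
          Gᵀ * (MD D m l - (MD D m l)ᵀ) * G + (MD D m l - (MD D m l)ᵀ) := by
        rw [Matrix.transpose_add, Matrix.transpose_mul, Matrix.transpose_mul,
          Matrix.transpose_transpose, mul_sub, sub_mul, Matrix.mul_assoc Gᵀ (MD D m l)ᵀ]
        abel
      rw [this, hM]
      have : Gᵀ * (SD D m * TD D m) * G = Gᵀ * SD D m * (TD D m * G) := by
        simp only [Matrix.mul_assoc]
      rw [this, hG, ← Matrix.mul_assoc, hbeta, add_self_mat]
    exact (sub_eq_zero.mp h1).symm
  · intro x
    obtain ⟨i, σ, a, ha, rfl⟩ := exists_mk x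
    by_cases hal : a < l i
    · exact e3 i σ a ha hal
    · have hbi := hbound i
      rw [Matrix.add_apply, quad_apply, MD_apply, Finset.sum_eq_zero, Finset.sum_eq_zero,
        if_neg, if_neg]
      · simp
      · rintro ⟨-, h1, h2, -⟩
        rw [h1] at h2
        simp at h2
      · rintro ⟨-, -, -, -, h⟩
        omega
      · intro u _
        apply Finset.sum_eq_zero
        intro z _
        obtain ⟨j, τ, b, hb, rfl⟩ := exists_mk u
        obtain ⟨j', τ', b', hb', rfl⟩ := exists_mk z
        rw [UT_apply]
        split_ifs with hc
        · obtain ⟨rfl, rfl, rfl, h4⟩ := hc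
          by_cases h5 : a + (m j - m i) ≤ b
          · rw [hG0 (mkW j true b' hb'), mul_zero]
            simp only [bl_mk, ps_mk]
            omega
          · rw [hG0 (mkW j false b hb), zero_mul, zero_mul]
            simpa using h5
        · simp
      · intro u _
        obtain ⟨j, τ, b, hb, rfl⟩ := exists_mk u
        simp only [sd_mk, ps_mk, bl_mk]
        split_ifs with hc
        · rw [hG0]
          · simp
          · simp only [bl_mk, ps_mk]
            have hbj := hbound j
            rcases lt_trichotomy (m i) (m j) with h | h | h
            · have hij : j ≤ i := by
                by_contra hcon
                have := hmono (le_of_not_ge hcon)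
                omega
              have := hmlmono hij
              simp only at this
              omega
            · have := hfun _ _ h
              omega
            · have hij : i ≤ j := by
                by_contra hcon
                have := hmono (le_of_not_ge hcon)
                omega
              have := hlmono hij
              omega
        · rfl

end Lower

section LowerAssembly

variable {m l : Fin s → ℕ}

/-- Parameters for the commutant of the shift. -/
abbrev TIdx (m : Fin s → ℕ) : Type :=
  Σ q : (Fin s × Bool) × (Fin s × Bool), Fin (min (m q.1.1) (m q.2.1))

/-- Extension of a parameter vector by zero. -/
def zx {D : Type} [CommRing D] (z : TIdx m → D) (j : Fin s) (τ : Bool) (i : Fin s) (σ : Bool)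
    (c : ℕ) : D :=
  if h : c < min (m j) (m i) then z ⟨((j, τ), (i, σ)), ⟨c, h⟩⟩ else 0

/-- The element of the commutant of the shift with given parameters. -/
def parMat {D : Type} [CommRing D] (z : TIdx m → D) : Matrix (WIdx m) (WIdx m) D :=
  Matrix.of fun x y =>
    if ps y + (m (bl x) - m (bl y)) ≤ ps x then
      zx z (bl x) (sd x) (bl y) (sd y) (ps x - ps y - (m (bl x) - m (bl y))) else 0

theorem parMat_comm {D : Type} [CommRing D] (z : TIdx m → D) :
    TD D m * parMat z = parMat z * TD D m := by
  ext x y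
  obtain ⟨j, τ, a, ha, rfl⟩ := exists_mk x
  obtain ⟨i, σ, b, hb, rfl⟩ := exists_mk y
  rw [mul_TD_xt, xt]
  cases a with
  | zero =>
    rw [TD_mul_zero _ _ _ (by simp)]
    split_ifs with h
    · simp only [parMat, Matrix.of_apply, bl_mk, sd_mk, ps_mk]
      rw [if_neg (by omega)]
    · rfl
  | succ a =>
    rw [TD_mul_succ]
    split_ifs with h
    · simp only [parMat, Matrix.of_apply, bl_mk, sd_mk, ps_mk]
      by_cases h1 : b + (m j - m i) ≤ a
      · rw [if_pos h1, if_pos (by omega)]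
        congr 1
        omega
      · rw [if_neg h1, if_neg (by omega)]
    · simp only [parMat, Matrix.of_apply, bl_mk, sd_mk, ps_mk]
      rw [if_neg (by omega)]

theorem parMat_map {D D' : Type} [CommRing D] [CommRing D'] (φ : D →+* D') (z : TIdx m → D) :
    (parMat z).map φ = parMat fun t => φ (z t) := by
  ext x y
  simp only [parMat, zx, Matrix.map_apply, Matrix.of_apply]
  split_ifs <;> simp

theorem SD_map {D D' : Type} [CommRing D] [CommRing D'] (φ : D →+* D') :
    (SD D m).map φ = SD D' m := by
  ext x y
  simp only [SD, Matrix.map_apply, Matrix.of_apply]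
  split_ifs <;> simp

theorem MD_map {D D' : Type} [CommRing D] [CommRing D'] (φ : D →+* D') :
    (MD D m l).map φ = MD D' m l := by
  ext x y
  obtain ⟨j, τ, a, ha, rfl⟩ := exists_mk x
  obtain ⟨i, σ, b, hb, rfl⟩ := exists_mk y
  rw [Matrix.map_apply, MD_apply, MD_apply, map_add]
  congr 1 <;> split_ifs <;> simp

/-- Index set of the equations of the centralizer inside the commutant of the shift. -/
abbrev EIdx (m l : Fin s → ℕ) : Type :=
  (Σ j : Fin s, Fin j × Bool × Bool × Fin (m j)) ⊕ (Σ i : Fin s, Fin (m i)) ⊕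
    (Σ i : Fin s, Bool × Fin (l i))

/-- The equations of the centralizer inside the commutant of the shift. -/
def eqn {D : Type} [CommRing D] (hm0 : ∀ i, 0 < m i) (hlm : ∀ i, l i ≤ m i)
    (G : Matrix (WIdx m) (WIdx m) D) : EIdx m l → D
  | Sum.inl ⟨j, i, σ, τ, a⟩ =>
      (Gᵀ * SD D m * G - SD D m) (mkW j τ a a.2) (mkW ⟨i, i.2.trans j.2⟩ σ 0 (hm0 _))
  | Sum.inr (Sum.inl ⟨i, a⟩) =>
      (Gᵀ * SD D m * G - SD D m) (mkW i false a a.2) (mkW i true 0 (hm0 _))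
  | Sum.inr (Sum.inr ⟨i, σ, a⟩) =>
      (Gᵀ * MD D m l * G + MD D m l) (mkW i σ a (a.2.trans_le (hlm i)))
        (mkW i σ a (a.2.trans_le (hlm i)))

theorem eqn_map {D D' : Type} [CommRing D] [CommRing D'] (φ : D →+* D') (hm0 : ∀ i, 0 < m i)
    (hlm : ∀ i, l i ≤ m i) (G : Matrix (WIdx m) (WIdx m) D) (e : EIdx m l) :
    φ (eqn hm0 hlm G e) = eqn hm0 hlm (G.map φ) e := by
  have h1 : (Gᵀ * SD D m * G - SD D m).map φ =
      (G.map φ)ᵀ * SD D' m * G.map φ - SD D' m := by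
    rw [Matrix.map_sub _ (map_sub φ), Matrix.map_mul, Matrix.map_mul, SD_map,
      Matrix.transpose_map]
  have h2 : (Gᵀ * MD D m l * G + MD D m l).map φ =
      (G.map φ)ᵀ * MD D' m l * G.map φ + MD D' m l := by
    rw [Matrix.map_add _ (map_add φ), Matrix.map_mul, Matrix.map_mul, MD_map,
      Matrix.transpose_map]
  rcases e with ⟨j, i, σ, τ, a⟩ | ⟨i, a⟩ | ⟨i, σ, a⟩
  · simp only [eqn]
    rw [← h1]
    rfl
  · simp only [eqn]
    rw [← h1]
    rfl
  · simp only [eqn]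
    rw [← h2]
    rfl

theorem eqn_cent {D : Type} [CommRing D] (hm0 : ∀ i, 0 < m i)
    (hlm : ∀ i, l i ≤ m i) {G : Matrix (WIdx m) (WIdx m) D} (hG : IsCent l G) (e : EIdx m l) :
    eqn hm0 hlm G e = 0 := by
  rcases e with ⟨j, i, σ, τ, a⟩ | ⟨i, a⟩ | ⟨i, σ, a⟩
  · simp only [eqn]
    rw [hG.beta, sub_self]
    rfl
  · simp only [eqn]
    rw [hG.beta, sub_self]
    rfl
  · exact hG.diag _

/-- Parameters of the identity. -/
def idPar (k : Type) [Field k] (m : Fin s → ℕ) : TIdx m → k :=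
  fun t => if t.1.1 = t.1.2 ∧ (t.2 : ℕ) = 0 then 1 else 0

theorem parMat_id : parMat (idPar k m) = 1 := by
  ext x y
  obtain ⟨j, τ, a, ha, rfl⟩ := exists_mk x
  obtain ⟨i, σ, b, hb, rfl⟩ := exists_mk y
  rw [Matrix.one_apply]
  simp only [parMat, zx, idPar, Matrix.of_apply, bl_mk, sd_mk, ps_mk, Prod.mk.injEq, mk_inj]
  by_cases h : j = i ∧ τ = σ ∧ a = b
  · obtain ⟨rfl, rfl, rfl⟩ := h
    rw [if_pos (by omega), dif_pos (by simp; omega)]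
    simp
  · rw [if_neg h]
    split_ifs with h1 h2 h3
    · exfalso
      obtain ⟨⟨rfl, rfl⟩, h5⟩ := h3
      exact h ⟨rfl, rfl, by omega⟩
    · rfl
    · rfl
    · rfl

theorem lower_bound [CharP k 2] [IsAlgClosed k] (hm0 : ∀ i, 0 < m i) (hmono : Antitone m)
    (hlmono : Antitone l) (hmlmono : Antitone fun i => m i - l i)
    (hbound : ∀ i, m i / 2 ≤ l i ∧ l i ≤ m i)
    (hfun : ∀ i j, m i = m j → l i = l j) :
    (Nat.card (TIdx m) : WithBot ℕ∞) ≤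
      ringKrullDim (MvPolynomial (WIdx m × WIdx m) k ⧸ centralizerIdeal k m l) +
        (Nat.card (EIdx m l) : WithBot ℕ∞) := by
  have hlm : ∀ i, l i ≤ m i := fun i => (hbound i).2
  let GX : Matrix (WIdx m) (WIdx m) (MvPolynomial (TIdx m) k) := parMat MvPolynomial.X
  let p : EIdx m l → MvPolynomial (TIdx m) k := eqn hm0 hlm GX
  have hp0 : ∀ e, MvPolynomial.aeval (idPar k m) (p e) = 0 := by
    intro e
    have h := eqn_map (MvPolynomial.aeval (idPar k m) : MvPolynomial (TIdx m) k →ₐ[k] k).toRingHom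
      hm0 hlm GX e
    rw [parMat_map] at h
    have h2 : (fun t => (MvPolynomial.aeval (idPar k m) :
        MvPolynomial (TIdx m) k →ₐ[k] k).toRingHom (MvPolynomial.X t)) = idPar k m := by
      ext t
      exact MvPolynomial.aeval_X _ _
    rw [h2, parMat_id, eqn_cent hm0 hlm IsCent.one] at h
    exact h
  have hlow := dim_lower p (idPar k m) hp0
  refine hlow.trans ?_
  gcongr
  set J := Ideal.span (Set.range p) with hJ
  have hJle : J ≤ RingHom.ker (MvPolynomial.aeval (idPar k m) :
      MvPolynomial (TIdx m) k →ₐ[k] k) := by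
    rw [hJ, Ideal.span_le]
    rintro _ ⟨e, rfl⟩
    exact hp0 e
  have hJtop : J ≠ ⊤ := by
    intro h
    have : (1 : MvPolynomial (TIdx m) k) ∈ J := by rw [h]; trivial
    have := hJle this
    rw [RingHom.mem_ker, map_one] at this
    exact one_ne_zero this
  have : Nontrivial (MvPolynomial (TIdx m) k ⧸ J) := Ideal.Quotient.nontrivial_iff.mpr hJtop
  have : CharP (MvPolynomial (TIdx m) k ⧸ J) 2 :=
    charP_of_injective_algebraMap (algebraMap k (MvPolynomial (TIdx m) k ⧸ J)).injective 2
  -- the centralizer equations hold modulo `J`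
  have hcent : IsCent l (GX.map (Ideal.Quotient.mk J)) := by
    have hz : ∀ e, eqn hm0 hlm (GX.map (Ideal.Quotient.mk J)) e = 0 := by
      intro e
      rw [← eqn_map, Ideal.Quotient.eq_zero_iff_mem]
      exact Ideal.subset_span ⟨e, rfl⟩
    rw [parMat_map] at hz ⊢
    refine lower_key hm0 hmono hlmono hmlmono hbound hfun (parMat_comm _) ?_ ?_ ?_ ?_
    · intro x y h
      simp only [parMat, Matrix.of_apply]
      rw [if_neg h]
    · intro i j σ τ a ha hij
      exact hz (Sum.inl ⟨j, ⟨i, hij⟩, σ, τ, ⟨a, ha⟩⟩)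
    · intro i a ha
      exact hz (Sum.inr (Sum.inl ⟨i, ⟨a, ha⟩⟩))
    · intro i σ a ha hal
      exact hz (Sum.inr (Sum.inr ⟨i, σ, ⟨a, hal⟩⟩))
  let Ψ : MvPolynomial (WIdx m × WIdx m) k →ₐ[k] MvPolynomial (TIdx m) k :=
    MvPolynomial.aeval fun c => GX c.1 c.2
  have hΨ : Function.Surjective Ψ := by
    rw [← AlgHom.range_eq_top, eq_top_iff, ← MvPolynomial.adjoin_range_X, Algebra.adjoin_le_iff]
    rintro _ ⟨⟨⟨⟨j, τ⟩, ⟨i, σ⟩⟩, c⟩, rfl⟩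
    have hc : (c : ℕ) < min (m j) (m i) := c.2
    refine ⟨MvPolynomial.X (mkW j τ (c + (m j - m i)) (by omega), mkW i σ 0 (hm0 i)), ?_⟩
    change Ψ _ = _
    simp only [Ψ, MvPolynomial.aeval_X, GX, parMat, Matrix.of_apply, bl_mk, sd_mk, ps_mk]
    rw [if_pos (by omega), zx, dif_pos (by omega)]
    congr 3
    omega
  let Φ : MvPolynomial (WIdx m × WIdx m) k →ₐ[k] MvPolynomial (TIdx m) k ⧸ J :=
    (Ideal.Quotient.mkₐ k J).comp Ψ
  have hΦ : Function.Surjective Φ := (Ideal.Quotient.mkₐ_surjective k J).comp hΨ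
  have hΦ0 : ∀ q ∈ centralizerIdeal k m l, Φ q = 0 := by
    have h := (isCent_iff (k := k) (l := l)
      (fun c : WIdx m × WIdx m => Ideal.Quotient.mk J (GX c.1 c.2))).2 hcent
    intro q hq
    have h2 : Φ = MvPolynomial.aeval
        (fun c : WIdx m × WIdx m => Ideal.Quotient.mk J (GX c.1 c.2)) := by
      apply MvPolynomial.algHom_ext
      intro c
      simp [Φ, Ψ]
    rw [h2]
    exact h q hq
  exact ringKrullDim_le_of_surjective
    (Ideal.Quotient.lift (centralizerIdeal k m l) Φ.toRingHom hΦ0)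
    (Ideal.Quotient.lift_surjective_of_surjective _ hΦ0 hΦ)

end LowerAssembly

section Count

variable {m l : Fin s → ℕ}

theorem card_FIdx (hbound : ∀ i, m i / 2 ≤ l i ∧ l i ≤ m i) :
    Nat.card (FIdx m l) = ∑ i : Fin s, ((4 * (i : ℕ) + 3) * m i - 2 * l i) := by
  rw [Nat.card_eq_fintype_card]
  simp only [FIdx, Fintype.card_sum, Fintype.card_sigma, Fintype.card_prod, Fintype.card_fin,
    Fintype.card_bool]
  rw [← Finset.sum_add_distrib, ← Finset.sum_add_distrib]
  apply Finset.sum_congr rfl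
  intro i _
  have h := (hbound i).2
  obtain ⟨d, hd⟩ := Nat.exists_eq_add_of_le h
  have e : m i - l i = d := by omega
  rw [e]
  have e2 : (4 * (i : ℕ) + 3) * m i = (i * (2 * (2 * m i)) + (m i + 2 * d)) + 2 * l i := by
    have : 2 * m i = 2 * l i + 2 * d := by omega
    linear_combination this
  omega

theorem sum_lt (f : Fin s → ℕ) :
    (∑ i : Fin s, ∑ j : Fin s, if j < i then f i else 0) = ∑ i : Fin s, (i : ℕ) * f i := by
  apply Finset.sum_congr rfl
  intro i _
  rw [← Finset.sum_filter, Finset.sum_const, smul_eq_mul]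
  congr 1
  have : (Finset.univ.filter fun j => j < i) = Finset.Iio i := by ext; simp
  rw [this, Fin.card_Iio]

theorem sum_min (hmono : Antitone m) :
    (∑ i : Fin s, ∑ j : Fin s, min (m i) (m j)) = ∑ i : Fin s, (2 * (i : ℕ) + 1) * m i := by
  have h : ∀ i j : Fin s, min (m i) (m j) =
      (if j < i then m i else 0) + (if i < j then m j else 0) + (if i = j then m i else 0) := by
    intro i j
    rcases lt_trichotomy i j with h | h | h
    · rw [if_neg h.not_gt, if_pos h, if_neg h.ne, min_eq_right (hmono h.le)]; simp
    · subst h; simp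
    · rw [if_pos h, if_neg h.not_gt, if_neg h.ne', min_eq_left (hmono h.le)]; simp
  simp only [h, Finset.sum_add_distrib]
  rw [sum_lt, Finset.sum_comm (f := fun i j : Fin s => if i < j then m j else 0), sum_lt]
  simp only [Finset.sum_ite_eq, Finset.mem_univ, if_true]
  rw [← Finset.sum_add_distrib, ← Finset.sum_add_distrib]
  apply Finset.sum_congr rfl
  intro i _
  ring

theorem card_TIdx (hmono : Antitone m) :
    Nat.card (TIdx m) = ∑ i : Fin s, (8 * (i : ℕ) + 4) * m i := by
  rw [Nat.card_eq_fintype_card]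
  simp only [TIdx, Fintype.card_sigma, Fintype.card_fin]
  simp only [Fintype.sum_prod_type, Finset.sum_const, Finset.card_univ, Fintype.card_bool,
    smul_eq_mul]
  have h := sum_min hmono
  calc _ = 4 * ∑ i : Fin s, ∑ j : Fin s, min (m i) (m j) := by
        simp only [Finset.mul_sum]
        apply Finset.sum_congr rfl
        intro i _
        apply Finset.sum_congr rfl
        intro j _
        ring
    _ = _ := by
        rw [h, Finset.mul_sum]
        apply Finset.sum_congr rfl
        intro i _
        ring

theorem card_add (hmono : Antitone m) (hbound : ∀ i, m i / 2 ≤ l i ∧ l i ≤ m i) :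
    Nat.card (FIdx m l) + Nat.card (EIdx m l) = Nat.card (TIdx m) := by
  rw [card_TIdx hmono, card_FIdx hbound, Nat.card_eq_fintype_card]
  simp only [EIdx, Fintype.card_sum, Fintype.card_sigma, Fintype.card_prod, Fintype.card_fin,
    Fintype.card_bool]
  rw [← Finset.sum_add_distrib, ← Finset.sum_add_distrib, ← Finset.sum_add_distrib]
  apply Finset.sum_congr rfl
  intro i _
  have h := (hbound i).2
  have e1 : (4 * (i : ℕ) + 3) * m i = 4 * (i * m i) + 3 * m i := by ring
  have e2 : (8 * (i : ℕ) + 4) * m i = 8 * (i * m i) + 4 * m i := by ring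
  have e3 : (i : ℕ) * (2 * (2 * m i)) = 4 * (i * m i) := by ring
  rw [e1, e2, e3]
  omega

theorem cancel_dim (x : WithBot ℕ∞) (a b c : ℕ) (h1 : x ≤ (a : WithBot ℕ∞))
    (h2 : (c : WithBot ℕ∞) ≤ x + (b : WithBot ℕ∞)) (h : a + b = c) : x = (a : WithBot ℕ∞) := by
  induction x using WithBot.recBotCoe with
  | bot =>
    rw [WithBot.bot_add, le_bot_iff] at h2
    exact absurd h2 (WithBot.coe_ne_bot (a := (c : ℕ∞)))
  | coe x =>
    induction x using ENat.recTopCoe with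
    | top =>
      have h3 : (⊤ : ℕ∞) ≤ (a : ℕ∞) := WithBot.coe_le_coe.mp h1
      exact absurd (top_le_iff.mp h3) (ENat.natCast_ne_top a)
    | coe n =>
      have h3 : n ≤ a := by exact_mod_cast h1
      have h4 : c ≤ n + b := by exact_mod_cast h2
      have : n = a := by omega
      rw [this]
      rfl

end Count

end CentAux

/-- for the form module `V = W_{χ(m₁)}(m₁) ⊕ ⋯ ⊕ W_{χ(m_s)}(m_s)`
(`m₁ ≥ … ≥ m_s`) over an algebraically closed field of characteristic 2, the centralizer
`Z(V)` of the corresponding nilpotent `ξ ∈ sp(2n)*` in `Sp(2n)` has dimension (as an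
affine variety, i.e. the Krull dimension of its coordinate ring)
`Σᵢ ((4i−1)mᵢ − 2χ(mᵢ))`. -/
theorem dim_symplectic_dual_centralizer
    [CharP k 2] [IsAlgClosed k] (m l : Fin s → ℕ)
    (hm0 : ∀ i, 0 < m i) (hmono : Antitone m) (hlmono : Antitone l)
    (hmlmono : Antitone fun i => m i - l i)
    (hbound : ∀ i, m i / 2 ≤ l i ∧ l i ≤ m i)
    (hfun : ∀ i j, m i = m j → l i = l j) :
    ringKrullDim (MvPolynomial (WIdx m × WIdx m) k ⧸ centralizerIdeal k m l)
      = ((∑ i : Fin s, ((4 * (i : ℕ) + 3) * m i - 2 * l i) : ℕ) : WithBot (WithTop ℕ)) := by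

  have h := CentAux.cancel_dim _ _ _ _ (CentAux.upper_bound (k := k) hm0 fun i => (hbound i).2)
    (CentAux.lower_bound hm0 hmono hlmono hmlmono hbound hfun) (CentAux.card_add hmono hbound)
  rw [h, CentAux.card_FIdx hbound]
  rfl
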